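/- For every integer m with 1 ≤ m < q, the kernel of the surjective 𝕜G-module homomorphism π_{q,m} : V_q → V_m given by sending x_i to x_i for i < m and x_i to 0 for m ≤ i ≤ q − 1 is isomorphic as a 𝕜G-module to V_{q−m}^* (the dual of V_{q−m}). Equivalently, since V_q is the projective cover of V_m, Ω(V_m) ≅ V_{q−m}^*, where Ω denotes the Heller shift. -/

import Mathlib

/-!
For `i ≤ k < q = p ^ n` one has `C(k, i) = (-1) ^ (k - i) * C(q - 1 - i, q - 1 - k)` in
characteristic `p` (`choose_reflect`), because `C(q - 1, j) = (-1) ^ j` there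
(`choose_pred_prime_pow`).  The kernel of `V_q → V_m` is spanned by `x_m, …, x_{q-1}`, and the
identity says that, after the reversal `k ↦ q - 1 - k` of the indices, the matrix of `α` on this
kernel is the transpose of the matrix of `-α` on `V_{q-m}` (`Bmat_reflect`).  That transpose is
the matrix of `α` on the dual of `V_{q-m}` in the dual basis, so `x_k ↦` (dual basis vector of
index `q - 1 - k`) is the isomorphism; its inverse is the map `dualToKer`.
-/

/-!
Setting (common to the paper "Tensor products and symmetric powers of modular
representations of elementary abelian p-groups"):

`p` is a prime, `𝕜` a field of characteristic `p`, `q = p^n`, and `G` an elementary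
abelian `p`-group of order `q`, identified with an additive subgroup `E ⊆ 𝕜` of order
`q` via a faithful indecomposable 2-dimensional module `W`, on which `α ∈ E` acts by
`[[1, α], [0, 1]]`.  For `1 ≤ m ≤ q`, `V_m = S^{m-1}(W)^*` is modelled concretely as
`𝕜^m` with basis `x_0, …, x_{m-1}`, on which `α ∈ E` acts by
`α · x_i = ∑_{j=0}^{m-1-i} C(i+j, i) (−α)^j x_{i+j}`.
-/

open scoped BigOperators TensorProduct
open CategoryTheory CategoryTheory.Limits MonoidalCategory MvPolynomial

namespace ElemAbelianPaper

variable (𝕜 : Type) [Field 𝕜]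

/-- The matrix of the action of `α` on `V_m` in the basis `x_0, …, x_{m-1}`:
entry `(k, i)` is `C(k,i) (−α)^{k−i}`, encoding `α · x_i = ∑_j C(i+j,i) (−α)^j x_{i+j}`. -/
noncomputable def Bmat (m : ℕ) (α : 𝕜) : Matrix (Fin m) (Fin m) 𝕜 :=
  Matrix.of fun k i => ((k : ℕ).choose (i : ℕ) : 𝕜) * (-α) ^ ((k : ℕ) - (i : ℕ))

/-- The action of `α ∈ 𝕜` on `V_m = 𝕜^m`. -/
noncomputable def Vact (m : ℕ) (α : 𝕜) : (Fin m → 𝕜) →ₗ[𝕜] (Fin m → 𝕜) :=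
  (Bmat 𝕜 m α).mulVecLin

theorem Vact_apply (m : ℕ) (α : 𝕜) (v : Fin m → 𝕜) (k : Fin m) :
    Vact 𝕜 m α v k =
      ∑ i : Fin m, (((k : ℕ).choose (i : ℕ) : 𝕜) * (-α) ^ ((k : ℕ) - (i : ℕ))) * v i := rfl

theorem choose_pred_prime_pow (p n : ℕ) (hp : p.Prime) [CharP 𝕜 p] (i : ℕ) (hi : i < p ^ n) :
    (((p ^ n - 1).choose i : ℕ) : 𝕜) = (-1) ^ i := by
  induction i with
  | zero => simp
  | succ i ih =>
    have h0 : (((p ^ n).choose (i + 1) : ℕ) : 𝕜) = 0 :=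
      (CharP.cast_eq_zero_iff 𝕜 p _).2 (hp.dvd_choose_pow (by omega) (by omega))
    have h1 : p ^ n = (p ^ n - 1) + 1 := by omega
    rw [h1, Nat.choose_succ_succ, Nat.cast_add, ih (by omega)] at h0
    rw [pow_succ]
    linear_combination h0

/-- Compare the two sides of `C(q-1, k) C(k, i) = C(q-1, i) C(q-1-i, k-i)`, where `q = p ^ n`. -/
theorem choose_reflect (p n : ℕ) (hp : p.Prime) [CharP 𝕜 p] (i k : ℕ) (hik : i ≤ k)
    (hk : k < p ^ n) :
    ((k.choose i : ℕ) : 𝕜) =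
      (-1) ^ (k - i) * (((p ^ n - 1 - i).choose (p ^ n - 1 - k) : ℕ) : 𝕜) := by
  have h := congrArg (Nat.cast : ℕ → 𝕜) (Nat.choose_mul (n := p ^ n - 1) (k := k) (s := i) hik)
  have hs : (p ^ n - 1 - i).choose (p ^ n - 1 - k) = (p ^ n - 1 - i).choose (k - i) :=
    Nat.choose_symm_of_eq_add (by omega)
  push_cast at h
  rw [choose_pred_prime_pow 𝕜 p n hp k hk, choose_pred_prime_pow 𝕜 p n hp i (by omega), ← hs] at h
  obtain ⟨d, rfl⟩ := Nat.exists_eq_add_of_le hik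
  rw [Nat.add_sub_cancel_left]
  have hi : ((-1 : 𝕜) ^ i) * (-1) ^ i = 1 := by rw [← mul_pow]; simp
  have hd : ((-1 : 𝕜) ^ d) * (-1) ^ d = 1 := by rw [← mul_pow]; simp
  have h2 := congrArg (fun x => (-1 : 𝕜) ^ i * (-1) ^ d * x) h
  simp only [pow_add] at h2
  linear_combination h2 + (-(((i + d).choose i : ℕ) : 𝕜) * ((-1) ^ d * (-1) ^ d) +
    (-1) ^ d * (((p ^ n - 1 - i).choose (p ^ n - 1 - (i + d)) : ℕ) : 𝕜)) * hi
    - (((i + d).choose i : ℕ) : 𝕜) * hd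

/-- Reversing the index set `0, …, q - 1` with `q = p ^ n` transposes the matrix entries of the
action and changes the sign of `α`. -/
theorem Bmat_reflect (p n : ℕ) (hp : p.Prime) [CharP 𝕜 p] (α : 𝕜) (i k : ℕ)
    (hi : i < p ^ n) (hk : k < p ^ n) :
    ((k.choose i : ℕ) : 𝕜) * (-α) ^ (k - i) =
      (((p ^ n - 1 - i).choose (p ^ n - 1 - k) : ℕ) : 𝕜) *
        (- -α) ^ ((p ^ n - 1 - i) - (p ^ n - 1 - k)) := by
  rcases le_or_gt i k with h | h
  · have he : (p ^ n - 1 - i) - (p ^ n - 1 - k) = k - i := by omega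
    rw [choose_reflect 𝕜 p n hp i k h hk, he, neg_neg, neg_pow α]
    have hd : ((-1 : 𝕜) ^ (k - i)) * (-1) ^ (k - i) = 1 := by rw [← mul_pow]; simp
    linear_combination (((p ^ n - 1 - i).choose (p ^ n - 1 - k) : ℕ) : 𝕜) * α ^ (k - i) * hd
  · rw [Nat.choose_eq_zero_of_lt h, Nat.choose_eq_zero_of_lt (by omega)]
    simp

/-- The linear map `V_{q-m}^* → V_q` whose value at `φ` has `x_k`-coordinate `φ(x_{q-1-k})` for
`k ≥ m`, and `0` for `k < m`. -/
noncomputable def dualToKer (q m : ℕ) :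
    Module.Dual 𝕜 (Fin (q - m) → 𝕜) →ₗ[𝕜] (Fin q → 𝕜) where
  toFun φ k := if h : m ≤ (k : ℕ) then φ (Pi.single ⟨q - 1 - k, by omega⟩ 1) else 0
  map_add' φ ψ := by
    ext k
    by_cases h : m ≤ (k : ℕ) <;> simp [h]
  map_smul' c φ := by
    ext k
    by_cases h : m ≤ (k : ℕ) <;> simp [h]

theorem dualToKer_of_lt {q m : ℕ} (φ : Module.Dual 𝕜 (Fin (q - m) → 𝕜)) (k : Fin q)
    (h : (k : ℕ) < m) : dualToKer 𝕜 q m φ k = 0 :=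
  dif_neg (by omega)

/-- The embedding of index sets `j ↦ q - 1 - j`, with image `m, …, q - 1`. -/
def revIdx {q m : ℕ} (j : Fin (q - m)) : Fin q := ⟨q - 1 - j, by omega⟩

theorem revIdx_injective {q m : ℕ} : Function.Injective (revIdx (q := q) (m := m)) := by
  intro a b h
  have := congrArg Fin.val h
  simp only [revIdx] at this
  ext
  omega

theorem exists_revIdx {q m : ℕ} (k : Fin q) (h : m ≤ (k : ℕ)) :
    ∃ j : Fin (q - m), revIdx j = k :=
  ⟨⟨q - 1 - k, by omega⟩, by ext; simp only [revIdx]; omega⟩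

theorem dualToKer_revIdx {q m : ℕ} (φ : Module.Dual 𝕜 (Fin (q - m) → 𝕜)) (j : Fin (q - m)) :
    dualToKer 𝕜 q m φ (revIdx j) = φ (Pi.single j 1) := by
  have h : m ≤ ((revIdx j : Fin q) : ℕ) := by simp only [revIdx]; omega
  have hj : (⟨q - 1 - (revIdx j : Fin q), by omega⟩ : Fin (q - m)) = j := by
    ext; simp only [revIdx]; omega
  exact (dif_pos h).trans (by rw [hj])

theorem dualToKer_injective (q m : ℕ) : Function.Injective (dualToKer 𝕜 q m) := by
  intro φ ψ h
  refine LinearMap.pi_ext' fun j => LinearMap.ext_ring ?_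
  simpa [dualToKer_revIdx] using congrFun h (revIdx j)

theorem range_dualToKer {q m : ℕ} (hm : m ≤ q) :
    LinearMap.range (dualToKer 𝕜 q m) =
      LinearMap.ker (LinearMap.funLeft 𝕜 𝕜 (Fin.castLE hm)) := by
  ext v
  rw [LinearMap.mem_range, LinearMap.mem_ker]
  constructor
  · rintro ⟨φ, rfl⟩
    ext k
    exact dualToKer_of_lt 𝕜 φ _ k.2
  · intro hv
    refine ⟨Fintype.linearCombination 𝕜 (fun j => v (revIdx j)), ?_⟩
    ext k
    rcases lt_or_ge (k : ℕ) m with h | h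
    · rw [dualToKer_of_lt 𝕜 _ k h]
      exact (congrFun hv ⟨k, h⟩).symm
    · obtain ⟨j, rfl⟩ := exists_revIdx k h
      rw [dualToKer_revIdx]
      simp

theorem dualToKer_equivariant (p n m : ℕ) (hp : p.Prime) [CharP 𝕜 p] (α : 𝕜)
    (φ : Module.Dual 𝕜 (Fin (p ^ n - m) → 𝕜)) :
    dualToKer 𝕜 (p ^ n) m (φ ∘ₗ Vact 𝕜 (p ^ n - m) (-α)) =
      Vact 𝕜 (p ^ n) α (dualToKer 𝕜 (p ^ n) m φ) := by
  ext k
  rw [Vact_apply]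
  rcases lt_or_ge (k : ℕ) m with h | h
  · rw [dualToKer_of_lt 𝕜 _ k h]
    refine (Finset.sum_eq_zero fun i _ => ?_).symm
    rcases lt_or_ge (i : ℕ) m with hi | hi
    · rw [dualToKer_of_lt 𝕜 _ i hi, mul_zero]
    · rw [Nat.choose_eq_zero_of_lt (by omega)]
      simp
  · obtain ⟨j, rfl⟩ := exists_revIdx k h
    rw [dualToKer_revIdx, LinearMap.comp_apply, LinearMap.pi_apply_eq_sum_univ φ]
    refine Fintype.sum_of_injective revIdx revIdx_injective _ _ (fun i hi => ?_) (fun i => ?_)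
    · rw [dualToKer_of_lt, mul_zero]
      by_contra hmi
      exact hi (exists_revIdx i (by omega))
    · have hsingle : (fun l => if i = l then (1 : 𝕜) else 0) = Pi.single i 1 := by
        ext l
        simp [Pi.single_apply, eq_comm]
      rw [dualToKer_revIdx, Vact_apply, smul_eq_mul, hsingle,
        Bmat_reflect 𝕜 p n hp α _ _ (revIdx i).2 (revIdx j).2]
      have hi : p ^ n - 1 - ((revIdx i : Fin (p ^ n)) : ℕ) = i := by simp only [revIdx]; omega
      have hj : p ^ n - 1 - ((revIdx j : Fin (p ^ n)) : ℕ) = j := by simp only [revIdx]; omega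
      rw [hi, hj]
      congr 1
      simp [Pi.single_apply]

/-- The matrices of the action are lower triangular and the one for `V_m` is the top left block
of the one for `V_q`, so truncation to the first `m` coordinates is equivariant. -/
theorem funLeft_equivariant {q m : ℕ} (hm : m ≤ q) (α : 𝕜) (v : Fin q → 𝕜) :
    LinearMap.funLeft 𝕜 𝕜 (Fin.castLE hm) (Vact 𝕜 q α v) =
      Vact 𝕜 m α (LinearMap.funLeft 𝕜 𝕜 (Fin.castLE hm) v) := by
  ext k
  rw [LinearMap.funLeft_apply, Vact_apply, Vact_apply]
  refine (Fintype.sum_of_injective (Fin.castLE hm) (Fin.castLE_injective hm) _ _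
    (fun i hi => ?_) (fun i => rfl)).symm
  have : m ≤ (i : ℕ) := by
    by_contra h
    exact hi ⟨⟨i, by omega⟩, rfl⟩
  rw [Nat.choose_eq_zero_of_lt (by simp only [Fin.val_castLE]; omega)]
  simp

/-- **Proposition (Heller shift).** For `1 ≤ m < q`, the kernel of the surjective
`𝕜G`-homomorphism `π_{q,m} : V_q → V_m` (sending `x_i ↦ x_i` for `i < m` and
`x_i ↦ 0` for `m ≤ i ≤ q−1`) is isomorphic to `V_{q−m}^*`, the dual of `V_{q−m}`
(on which `α` acts by precomposition with the action of `−α`).  Equivalently, since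
`V_q` is the projective cover of `V_m`, `Ω(V_m) ≅ V_{q−m}^*`. -/
theorem heller_shift (p n : ℕ) (hp : p.Prime) [CharP 𝕜 p]
    (E : AddSubgroup 𝕜) (hE : Nat.card E = p ^ n)
    (m : ℕ) (hm1 : 1 ≤ m) (hm : m < p ^ n) :
    ∀ pi : (Fin (p ^ n) → 𝕜) →ₗ[𝕜] (Fin m → 𝕜),
      pi = LinearMap.funLeft 𝕜 𝕜 (Fin.castLE (le_of_lt hm)) →
      (∀ α ∈ E, ∀ v, pi (Vact 𝕜 (p ^ n) α v) = Vact 𝕜 m α (pi v)) ∧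
      Function.Surjective pi ∧
      ∃ g : Module.Dual 𝕜 (Fin (p ^ n - m) → 𝕜) →ₗ[𝕜] (Fin (p ^ n) → 𝕜),
        Function.Injective g ∧ LinearMap.range g = LinearMap.ker pi ∧
        ∀ α ∈ E, ∀ φ : Module.Dual 𝕜 (Fin (p ^ n - m) → 𝕜),
          g (φ ∘ₗ Vact 𝕜 (p ^ n - m) (-α)) = Vact 𝕜 (p ^ n) α (g φ) := by
  rintro _ rfl
  refine ⟨fun α _ v => funLeft_equivariant 𝕜 hm.le α v,
    LinearMap.funLeft_surjective_of_injective 𝕜 𝕜 _ (Fin.castLE_injective hm.le),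
    dualToKer 𝕜 (p ^ n) m, dualToKer_injective 𝕜 _ _, range_dualToKer 𝕜 hm.le,
    fun α _ φ => dualToKer_equivariant 𝕜 p n m hp α φ⟩

end ElemAbelianPaper
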